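/- arXiv:1410.8424 — 2 statements merged into one kernel-verified Lean document; each statement's English description precedes it below -/
import Mathlib

section
/- If Γ is a regular connected digraph whose adjacency matrix A is normal, has no undirected edges (A + Aᵀ is a {0,1} matrix), and has exactly four distinct eigenvalues k, τ, θ, θ̄ (with τ real and θ non-real), then the linear span of {I, A, Aᵀ, J − I − A − Aᵀ} is closed under matrix multiplication, i.e., Γ is a relation of a non-symmetric association scheme with three classes. -/
open Matrix

/-- The v×v all-ones matrix over ℝ. -/
def allOnes (v : ℕ) : Matrix (Fin v) (Fin v) ℝ := Matrix.of fun _ _ => 1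

/-!
Let `J` be the all-ones matrix. The real matrices that act as a scalar on each complex eigenspace
of `A` form an algebra, which contains `1`, `A`, `Aᵀ` and `J`. Being real, such a matrix takes a
real value at `τ` and conjugate values at `θ` and `conj θ`. If `re θ ≠ τ`, these are the values of
`a + b μ + c (conj μ)` for suitable real `a`, `b`, `c`, so the matrix differs from `a + b A + c Aᵀ`
by a multiple of `J`, and the algebra is the span of `1`, `A`, `Aᵀ` and `J`.

If `re θ = τ` and `τ` is an eigenvalue, then `A + Aᵀ - 2 τ` is a multiple of `J`. Comparing
entries, the digraph is a tournament and `τ = -1/2`, which is not an algebraic integer and hence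
not an eigenvalue of `A`. If `τ` is not an eigenvalue, it can be replaced by any other real number.
-/

section NormalMatrix

variable {n R : Type*} [Fintype n] [CommRing R] [StarRing R]

theorem conjTranspose_mulVec_eq_zero_iff [PartialOrder R] [StarOrderedRing R] [NoZeroDivisors R]
    (T : Matrix n n R) [IsStarNormal T] (x : n → R) :
    Tᴴ *ᵥ x = 0 ↔ T *ᵥ x = 0 := by
  rw [← self_mul_conjTranspose_mulVec_eq_zero, ← conjTranspose_mul_self_mulVec_eq_zero T,
    ← star_eq_conjTranspose, star_comm_self' T]

theorem isStarNormal_sub_smul_one [DecidableEq n] (T : Matrix n n R) [IsStarNormal T] (μ : R) :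
    IsStarNormal (T - μ • 1) :=
  Commute.isStarNormal_sub (by
    rw [star_smul, star_one]
    exact (Commute.one_right T).smul_right _)

theorem sub_smul_one_mulVec_eq_zero_iff {R : Type*} [CommRing R] [DecidableEq n]
    {T : Matrix n n R} {μ : R} {x : n → R} : (T - μ • 1) *ᵥ x = 0 ↔ T *ᵥ x = μ • x := by
  rw [sub_mulVec, smul_mulVec, one_mulVec, sub_eq_zero]

variable [PartialOrder R] [StarOrderedRing R] [NoZeroDivisors R]

theorem conjTranspose_mulVec_eq_star_smul {T : Matrix n n R} [IsStarNormal T] {μ : R} {x : n → R}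
    (hx : T *ᵥ x = μ • x) : Tᴴ *ᵥ x = star μ • x := by
  classical
  have := isStarNormal_sub_smul_one T μ
  rw [← sub_smul_one_mulVec_eq_zero_iff, ← conjTranspose_mulVec_eq_zero_iff] at hx
  rwa [conjTranspose_sub, conjTranspose_smul, conjTranspose_one,
    sub_smul_one_mulVec_eq_zero_iff] at hx

theorem mulVec_eq_zero_of_pow_mulVec_eq_zero [DecidableEq n] {T : Matrix n n R} [IsStarNormal T]
    {m : ℕ} {x : n → R} (hx : T ^ m *ᵥ x = 0) : T *ᵥ x = 0 := by
  induction m generalizing x with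
  | zero => rw [pow_zero, one_mulVec] at hx; rw [hx, mulVec_zero]
  | succ m ih =>
    have hTx : T *ᵥ T *ᵥ x = 0 := ih (by rwa [mulVec_mulVec, ← pow_succ])
    rwa [← conjTranspose_mulVec_eq_zero_iff, mulVec_mulVec,
      conjTranspose_mul_self_mulVec_eq_zero] at hTx

open scoped ComplexOrder in
theorem iSup_eigenspace_toLin'_eq_top [DecidableEq n] (T : Matrix n n ℂ) [IsStarNormal T] :
    ⨆ μ, Module.End.eigenspace (toLin' T) μ = ⊤ := by
  rw [eq_top_iff, ← Module.End.iSup_maxGenEigenspace_eq_top (toLin' T)]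
  refine iSup_mono fun μ x hx => ?_
  have := isStarNormal_sub_smul_one T μ
  obtain ⟨m, hm⟩ := (Module.End.mem_maxGenEigenspace _ _ _).mp hx
  rw [show (1 : Module.End ℂ (n → ℂ)) = toLin' 1 from toLin'_one.symm, ← map_smul,
    ← map_sub, ← toLin'_pow, toLin'_apply] at hm
  rw [Module.End.mem_eigenspace_iff, toLin'_apply]
  exact sub_smul_one_mulVec_eq_zero_iff.mp (mulVec_eq_zero_of_pow_mulVec_eq_zero hm)

theorem eq_of_forall_eigenvector_mulVec_eq (T : Matrix n n ℂ) [IsStarNormal T] {M N : Matrix n n ℂ}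
    (h : ∀ (μ : ℂ) (x : n → ℂ), T *ᵥ x = μ • x → M *ᵥ x = N *ᵥ x) : M = N := by
  classical
  have htop : LinearMap.eqLocus (toLin' M) (toLin' N) = ⊤ := by
    rw [eq_top_iff, ← iSup_eigenspace_toLin'_eq_top T]
    exact iSup_le fun μ x hx => h μ x (Module.End.mem_eigenspace_iff.mp hx)
  exact toLin'.injective (LinearMap.eqLocus_eq_top.mp htop)

end NormalMatrix

section IntegralEigenvalue

variable {n : Type*} [Fintype n] [DecidableEq n]

theorem isIntegral_of_mulVec_eq_smul {R K : Type*} [CommRing R] [Field K] [Algebra R K]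
    {M : Matrix n n K} (hM : IsIntegral R M) {μ : K} {x : n → K} (hx0 : x ≠ 0)
    (hx : M *ᵥ x = μ • x) : IsIntegral R μ := by
  obtain ⟨p, hp, hpM⟩ := hM
  refine ⟨p, hp, ?_⟩
  have hev : Module.End.HasEigenvector (toLin' M) μ x := ⟨Module.End.mem_eigenspace_iff.mpr hx, hx0⟩
  have h := Module.End.aeval_apply_of_hasEigenvector (p := p.map (algebraMap R K)) hev
  have h0 : Polynomial.aeval (toLin' M) (p.map (algebraMap R K)) = 0 := by
    change Polynomial.aeval (toLinAlgEquiv' M) _ = 0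
    rw [Polynomial.aeval_algHom_apply, Polynomial.aeval_map_algebraMap,
      Polynomial.aeval_def, hpM, map_zero]
  rw [h0, LinearMap.zero_apply, eq_comm, smul_eq_zero_iff_left hx0] at h
  rwa [← Polynomial.eval_map]

theorem isIntegral_map_intCast {R : Type*} [Ring R] (B : Matrix n n ℤ) :
    IsIntegral ℤ (B.map (Int.cast : ℤ → R)) :=
  map_isIntegral_int (Int.castRingHom R).mapMatrix B.isIntegral

theorem not_isIntegral_neg_one_half : ¬ IsIntegral ℤ (-1 / 2 : ℂ) := by
  intro h
  have hq : IsIntegral ℤ (-1 / 2 : ℚ) := by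
    rw [← isIntegral_algebraMap_iff (algebraMap ℚ ℂ).injective]
    simpa using h
  obtain ⟨m, hm⟩ := IsIntegrallyClosed.isIntegral_iff.mp hq
  have h2 : 2 * m = -1 := by
    have : (2 * m : ℚ) = -1 := by rw [show (m : ℚ) = -1 / 2 from hm]; norm_num
    exact_mod_cast this
  omega

end IntegralEigenvalue

section Complexification

variable {n : Type*} [Fintype n] [DecidableEq n]

/-- Entrywise extension of scalars from `ℝ` to `ℂ`, through which a real matrix acts on complex
vectors. -/
def complexify : Matrix n n ℝ →ₐ[ℝ] Matrix n n ℂ :=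
  Complex.ofRealAm.mapMatrix

theorem conjTranspose_complexify (A : Matrix n n ℝ) : (complexify A)ᴴ = complexify Aᵀ := by
  ext i j
  exact Complex.conj_ofReal (A j i)

theorem isStarNormal_complexify {A : Matrix n n ℝ} (hA : Commute A Aᵀ) :
    IsStarNormal (complexify A) :=
  ⟨by rw [star_eq_conjTranspose, conjTranspose_complexify]; exact hA.symm.map complexify⟩

theorem complexify_injective : Function.Injective (complexify (n := n)) :=
  map_injective Complex.ofReal_injective

open scoped ComplexOrder in
theorem complexify_transpose_mulVec_eq_star_smul {A : Matrix n n ℝ} (hA : Commute A Aᵀ) {μ : ℂ}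
    {x : n → ℂ} (hx : complexify A *ᵥ x = μ • x) : complexify Aᵀ *ᵥ x = star μ • x := by
  have := isStarNormal_complexify hA
  rw [← conjTranspose_complexify, conjTranspose_mulVec_eq_star_smul hx]

theorem complexify_mulVec_star (P : Matrix n n ℝ) (x : n → ℂ) :
    complexify P *ᵥ star x = star (complexify P *ᵥ x) := by
  rw [star_mulVec, conjTranspose_complexify, ← mulVec_transpose]
  rfl

theorem complexify_mulVec_star_eq_smul {P : Matrix n n ℝ} {c : ℂ} {x : n → ℂ}
    (hx : complexify P *ᵥ x = c • x) : complexify P *ᵥ star x = star c • star x := by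
  rw [complexify_mulVec_star, hx, star_smul]

end Complexification

section EigenspaceScalars

variable {n : Type*} [Fintype n] [DecidableEq n]

/-- The algebra of the real matrices that act as a scalar on every complex eigenspace of `A`. For
normal `A` these are the real matrices in the span of the spectral projections of `A`. -/
def eigenspaceScalars (A : Matrix n n ℝ) : Subalgebra ℝ (Matrix n n ℝ) where
  carrier := {P | ∀ μ : ℂ, ∃ c : ℂ, ∀ x : n → ℂ,
    complexify A *ᵥ x = μ • x → complexify P *ᵥ x = c • x}
  mul_mem' {P Q} hP hQ μ := by
    obtain ⟨c, hc⟩ := hP μ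
    obtain ⟨d, hd⟩ := hQ μ
    refine ⟨d * c, fun x hx => ?_⟩
    rw [map_mul, ← mulVec_mulVec, hd x hx, mulVec_smul, hc x hx, smul_smul]
  add_mem' {P Q} hP hQ μ := by
    obtain ⟨c, hc⟩ := hP μ
    obtain ⟨d, hd⟩ := hQ μ
    refine ⟨c + d, fun x hx => ?_⟩
    rw [map_add, add_mulVec, hc x hx, hd x hx, add_smul]
  algebraMap_mem' r μ := ⟨r, fun x _ => by
    rw [AlgHom.commutes, Algebra.algebraMap_eq_smul_one, smul_mulVec, one_mulVec, Complex.coe_smul]⟩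

variable {A P : Matrix n n ℝ}

theorem self_mem_eigenspaceScalars (A : Matrix n n ℝ) : A ∈ eigenspaceScalars A :=
  fun μ => ⟨μ, fun _ => id⟩

theorem transpose_mem_eigenspaceScalars (hA : Commute A Aᵀ) : Aᵀ ∈ eigenspaceScalars A :=
  fun μ => ⟨star μ, fun _ => complexify_transpose_mulVec_eq_star_smul hA⟩

theorem mulVec_eq_star_smul_of_eigenvector_star {μ c : ℂ}
    (h : ∀ x : n → ℂ, complexify A *ᵥ x = μ • x → complexify P *ᵥ x = c • x) {x : n → ℂ}
    (hx : complexify A *ᵥ x = star μ • x) : complexify P *ᵥ x = star c • x := by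
  have hx' : complexify A *ᵥ star x = μ • star x := by
    simpa only [star_star] using complexify_mulVec_star_eq_smul hx
  simpa only [star_star] using complexify_mulVec_star_eq_smul (h _ hx')

theorem exists_real_scalar_of_mem_eigenspaceScalars (hP : P ∈ eigenspaceScalars A) (t : ℝ) :
    ∃ s : ℝ, ∀ x : n → ℂ,
      complexify A *ᵥ x = (t : ℂ) • x → complexify P *ᵥ x = (s : ℂ) • x := by
  obtain ⟨c, hc⟩ := hP t
  refine ⟨c.re, fun x hx => ?_⟩
  have hstar : complexify P *ᵥ x = star c • x :=
    mulVec_eq_star_smul_of_eigenvector_star hc (by rwa [Complex.star_def, Complex.conj_ofReal])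
  calc complexify P *ᵥ x
      = (1 / 2 : ℂ) • (complexify P *ᵥ x + complexify P *ᵥ x) := by module
    _ = (1 / 2 : ℂ) • (c • x + star c • x) := by nth_rw 1 [hc x hx]; rw [hstar]
    _ = ((c + star c) / 2) • x := by module
    _ = (c.re : ℂ) • x := by rw [Complex.re_eq_add_conj, Complex.star_def]

end EigenspaceScalars

section Regular

/-- The all-ones matrix `J`, over an arbitrary index type. -/
def onesMatrix (n : Type*) : Matrix n n ℝ :=
  of fun _ _ => 1

variable {n : Type*} [Fintype n] [DecidableEq n]

theorem complexify_onesMatrix_mulVec (x : n → ℂ) :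
    complexify (onesMatrix n) *ᵥ x = fun _ => ∑ i, x i := by
  ext
  simp [complexify, onesMatrix, mulVec, dotProduct]

theorem complexify_onesMatrix_mulVec_eq_card_smul {x : n → ℂ} (hx : ∀ i j, x i = x j) :
    complexify (onesMatrix n) *ᵥ x = (Fintype.card n : ℂ) • x := by
  ext i
  simp [complexify_onesMatrix_mulVec, fun j => hx j i]

variable {A N : Matrix n n ℝ} {k : ℝ}

theorem complexify_onesMatrix_mulVec_eq_zero (hA : Commute A Aᵀ) (hreg : A *ᵥ 1 = k • 1) {μ : ℂ}
    (hμ : μ ≠ k) {x : n → ℂ} (hx : complexify A *ᵥ x = μ • x) :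
    complexify (onesMatrix n) *ᵥ x = 0 := by
  have hone : complexify A *ᵥ 1 = (k : ℂ) • 1 := by
    ext i
    simpa [complexify, mulVec, dotProduct] using congrArg Complex.ofReal (congrFun hreg i)
  have hone' : complexify Aᵀ *ᵥ 1 = (k : ℂ) • 1 := by
    simpa using complexify_transpose_mulVec_eq_star_smul hA hone
  have hdot : μ * (1 ⬝ᵥ x) = k * (1 ⬝ᵥ x) :=
    calc μ * (1 ⬝ᵥ x) = 1 ⬝ᵥ complexify A *ᵥ x := by rw [hx, dotProduct_smul, smul_eq_mul]
      _ = (complexify Aᵀ *ᵥ 1) ⬝ᵥ x := by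
        rw [dotProduct_mulVec, ← mulVec_transpose]; rfl
      _ = k * (1 ⬝ᵥ x) := by rw [hone', smul_dotProduct, smul_eq_mul]
  have hsum : 1 ⬝ᵥ x = 0 := by
    by_contra h
    exact hμ (mul_right_cancel₀ h hdot)
  rw [one_dotProduct] at hsum
  rw [complexify_onesMatrix_mulVec, hsum]
  rfl

theorem onesMatrix_mem_eigenspaceScalars (hA : Commute A Aᵀ) (hreg : A *ᵥ 1 = k • 1)
    (hconn : ∀ x : n → ℂ, complexify A *ᵥ x = (k : ℂ) • x → ∀ i j, x i = x j) :
    onesMatrix n ∈ eigenspaceScalars A := by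
  intro μ
  by_cases hμ : μ = k
  · subst hμ
    exact ⟨Fintype.card n, fun x hx => complexify_onesMatrix_mulVec_eq_card_smul (hconn x hx)⟩
  · exact ⟨0, fun x hx => by rw [complexify_onesMatrix_mulVec_eq_zero hA hreg hμ hx, zero_smul]⟩

theorem exists_eq_smul_onesMatrix_of_mulVec_eq_zero (hA : Commute A Aᵀ) (hreg : A *ᵥ 1 = k • 1)
    (hconn : ∀ x : n → ℂ, complexify A *ᵥ x = (k : ℂ) • x → ∀ i j, x i = x j)
    (hN : N ∈ eigenspaceScalars A)
    (hker : ∀ (μ : ℂ) (x : n → ℂ), x ≠ 0 → μ ≠ k → complexify A *ᵥ x = μ • x →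
      complexify N *ᵥ x = 0) :
    ∃ d : ℝ, N = d • onesMatrix n := by
  cases isEmpty_or_nonempty n
  · exact ⟨0, Subsingleton.elim _ _⟩
  obtain ⟨w, hw⟩ := exists_real_scalar_of_mem_eigenspaceScalars hN k
  have := isStarNormal_complexify hA
  refine ⟨w / Fintype.card n, complexify_injective <|
    eq_of_forall_eigenvector_mulVec_eq (complexify A) fun μ x hx => ?_⟩
  rw [map_smul, smul_mulVec]
  by_cases hμ : μ = k
  · subst hμ
    rw [hw x hx, complexify_onesMatrix_mulVec_eq_card_smul (hconn x hx), ← Complex.coe_smul,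
      smul_smul]
    congr 1
    push_cast
    field_simp
  · rw [complexify_onesMatrix_mulVec_eq_zero hA hreg hμ hx, smul_zero]
    by_cases hx0 : x = 0
    · rw [hx0, mulVec_zero]
    · exact hker μ x hx0 hμ hx

end Regular

section Span

theorem exists_real_interpolation {t : ℝ} {θ : ℂ} (him : θ.im ≠ 0) (hre : θ.re ≠ t) (s : ℝ)
    (z : ℂ) : ∃ a b c : ℝ, (a + b * t + c * t : ℂ) = s ∧ a + b * θ + c * star θ = z := by
  obtain ⟨p, hp⟩ : ∃ p, p * (θ.re - t) = z.re - s :=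
    ⟨_, div_mul_cancel₀ _ (sub_ne_zero.mpr hre)⟩
  obtain ⟨q, hq⟩ : ∃ q, q * θ.im = z.im := ⟨_, div_mul_cancel₀ _ him⟩
  refine ⟨s - p * t, (p + q) / 2, (p - q) / 2, ?_, Complex.ext ?_ ?_⟩
  · push_cast
    ring
  · simp only [Complex.add_re, Complex.re_ofReal_mul, Complex.ofReal_re, Complex.star_def,
      Complex.conj_re]
    linear_combination hp
  · simp only [Complex.add_im, Complex.im_ofReal_mul, Complex.ofReal_im, Complex.star_def,
      Complex.conj_im]
    linear_combination hq

variable {n : Type*} [Fintype n] [DecidableEq n] {A : Matrix n n ℝ} {k t : ℝ} {θ : ℂ}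

theorem complexify_linearCombination_mulVec (hA : Commute A Aᵀ) (a b c : ℝ) {μ : ℂ} {x : n → ℂ}
    (hx : complexify A *ᵥ x = μ • x) :
    complexify (a • 1 + b • A + c • Aᵀ) *ᵥ x = (a + b * μ + c * star μ) • x := by
  simp only [map_add, map_smul, map_one, add_mulVec, smul_mulVec, one_mulVec, hx,
    complexify_transpose_mulVec_eq_star_smul hA hx]
  module

theorem toSubmodule_eigenspaceScalars_eq_span (hA : Commute A Aᵀ) (hreg : A *ᵥ 1 = k • 1)
    (hconn : ∀ x : n → ℂ, complexify A *ᵥ x = (k : ℂ) • x → ∀ i j, x i = x j)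
    (him : θ.im ≠ 0) (hre : θ.re ≠ t)
    (heig : ∀ (μ : ℂ) (x : n → ℂ), x ≠ 0 → μ ≠ k → complexify A *ᵥ x = μ • x →
      μ = t ∨ μ = θ ∨ μ = star θ) :
    (eigenspaceScalars A).toSubmodule =
      Submodule.span ℝ {1, A, Aᵀ, onesMatrix n - 1 - A - Aᵀ} := by
  have hA_mem := self_mem_eigenspaceScalars A
  have hAt_mem := transpose_mem_eigenspaceScalars hA
  have hJ_mem := onesMatrix_mem_eigenspaceScalars hA hreg hconn
  refine le_antisymm (fun P hP => ?_) (Submodule.span_le.mpr ?_)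
  · obtain ⟨s, hs⟩ := exists_real_scalar_of_mem_eigenspaceScalars hP t
    obtain ⟨z, hz⟩ := hP θ
    obtain ⟨a, b, c, hat, haθ⟩ := exists_real_interpolation him hre s z
    obtain ⟨d, hd⟩ : ∃ d : ℝ, P - (a • 1 + b • A + c • Aᵀ) = d • onesMatrix n := by
      refine exists_eq_smul_onesMatrix_of_mulVec_eq_zero hA hreg hconn (sub_mem hP ?_)
        fun μ x hx0 hμ hx => ?_
      · exact add_mem (add_mem (Subalgebra.smul_mem _ (one_mem _) a)
          (Subalgebra.smul_mem _ hA_mem b)) (Subalgebra.smul_mem _ hAt_mem c)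
      rw [map_sub, sub_mulVec, complexify_linearCombination_mulVec hA a b c hx, sub_eq_zero]
      rcases heig μ x hx0 hμ hx with rfl | rfl | rfl
      · rw [hs x hx, ← hat, Complex.star_def, Complex.conj_ofReal]
      · rw [hz x hx, haθ]
      · rw [mulVec_eq_star_smul_of_eigenvector_star hz hx, ← haθ]
        simp
    simp only [Submodule.mem_span_insert, Submodule.mem_span_singleton, exists_exists_eq_and]
    refine ⟨a + d, _, ⟨b + d, _, ⟨c + d, d, rfl⟩, rfl⟩, ?_⟩
    rw [← sub_add_cancel P (a • 1 + b • A + c • Aᵀ), hd]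
    module
  · rintro P (rfl | rfl | rfl | rfl)
    · exact (eigenspaceScalars A).one_mem
    · exact hA_mem
    · exact hAt_mem
    · exact sub_mem (sub_mem (sub_mem hJ_mem (eigenspaceScalars A).one_mem) hA_mem) hAt_mem

end Span

section OrientedGraph

variable {n : Type*} [DecidableEq n] {A : Matrix n n ℝ} {k t : ℝ}

theorem eq_neg_half_of_add_transpose_sub_smul_one {d : ℝ}
    (h01 : ∀ i j, A i j = 0 ∨ A i j = 1)
    (hasym : ∀ i j, (A + Aᵀ) i j = 0 ∨ (A + Aᵀ) i j = 1) (hne : A ≠ 0)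
    (h : A + Aᵀ - (2 * t) • (1 : Matrix n n ℝ) = d • onesMatrix n) : t = -1 / 2 := by
  simp only [Matrix.add_apply, transpose_apply] at hasym
  have hdiag : ∀ i, A i i = 0 := fun i => by
    rcases h01 i i with h | h
    · exact h
    · have := hasym i i
      norm_num [h] at this
  obtain ⟨i, j, hij⟩ : ∃ i j, A i j = 1 := by
    by_contra! hno
    exact hne (ext fun i j => (h01 i j).resolve_right (hno i j))
  have hij_ne : i ≠ j := by
    rintro rfl
    exact zero_ne_one ((hdiag i).symm.trans hij)
  have hji : A j i = 0 := (h01 j i).resolve_right fun hji => by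
    have := hasym i j
    norm_num [hij, hji] at this
  have hii_entry : -(2 * t) = d := by simpa [onesMatrix, hdiag] using congrFun (congrFun h i) i
  have hij_entry : 1 = d := by
    simpa [onesMatrix, hij, hji, hij_ne] using congrFun (congrFun h i) j
  linarith

variable [Fintype n]

theorem isIntegral_complexify_of_zero_or_one (h01 : ∀ i j, A i j = 0 ∨ A i j = 1) :
    IsIntegral ℤ (complexify A) := by
  have hB : ∀ i j, ∃ m : ℤ, (m : ℝ) = A i j := fun i j => by
    rcases h01 i j with h | h
    · exact ⟨0, by rw [h, Int.cast_zero]⟩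
    · exact ⟨1, by rw [h, Int.cast_one]⟩
  choose B hB using hB
  have hBA : (of B).map (Int.cast : ℤ → ℂ) = complexify A := by
    ext i j
    simp [complexify, ← hB]
  exact hBA ▸ isIntegral_map_intCast (of B)

theorem eigenvector_eq_zero_of_forall_re_eq (h01 : ∀ i j, A i j = 0 ∨ A i j = 1)
    (hasym : ∀ i j, (A + Aᵀ) i j = 0 ∨ (A + Aᵀ) i j = 1)
    (hA : Commute A Aᵀ) (hreg : A *ᵥ 1 = k • 1)
    (hconn : ∀ x : n → ℂ, complexify A *ᵥ x = (k : ℂ) • x → ∀ i j, x i = x j)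
    (hre : ∀ (μ : ℂ) (x : n → ℂ), x ≠ 0 → μ ≠ k → complexify A *ᵥ x = μ • x → μ.re = t)
    (htk : t ≠ k) {x : n → ℂ} (hx : complexify A *ᵥ x = (t : ℂ) • x) : x = 0 := by
  by_contra hx0
  obtain ⟨i, -⟩ := Function.ne_iff.mp hx0
  have hne : A ≠ 0 := by
    rintro rfl
    have ht : t = 0 := by simpa [hx0, eq_comm] using hx
    have hk : k = 0 := by simpa [eq_comm] using congrFun hreg i
    exact htk (ht.trans hk.symm)
  obtain ⟨d, hd⟩ : ∃ d : ℝ, A + Aᵀ - (2 * t) • 1 = d • onesMatrix n := by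
    refine exists_eq_smul_onesMatrix_of_mulVec_eq_zero hA hreg hconn (sub_mem ?_ ?_)
      fun μ y hy0 hμ hy => ?_
    · exact add_mem (self_mem_eigenspaceScalars A) (transpose_mem_eigenspaceScalars hA)
    · exact Subalgebra.smul_mem _ (one_mem _) _
    have hμt : μ + star μ = 2 * t := by
      rw [← hre μ y hy0 hμ hy, Complex.star_def, Complex.add_conj]
      push_cast
      rfl
    rw [map_sub, map_add, map_smul, map_one, sub_mulVec, add_mulVec, hy,
      complexify_transpose_mulVec_eq_star_smul hA hy, ← add_smul, hμt, smul_mulVec, one_mulVec]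
    module
  have ht : (t : ℂ) = -1 / 2 := by
    rw [eq_neg_half_of_add_transpose_sub_smul_one h01 hasym hne hd]
    push_cast
    rfl
  exact not_isIntegral_neg_one_half
    (ht ▸ isIntegral_of_mulVec_eq_smul (isIntegral_complexify_of_zero_or_one h01) hx0 hx)

end OrientedGraph

theorem stmt15_general {n : Type*} [Fintype n] [DecidableEq n] {k t : ℝ} {θ : ℂ} {A : Matrix n n ℝ}
    (h01 : ∀ i j, A i j = 0 ∨ A i j = 1)
    (hasym : ∀ i j, (A + Aᵀ) i j = 0 ∨ (A + Aᵀ) i j = 1)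
    (hreg : A *ᵥ 1 = k • 1) (hA : Commute A Aᵀ)
    (hconn : ∀ x : n → ℂ, complexify A *ᵥ x = (k : ℂ) • x → ∀ i j, x i = x j)
    (him : θ.im ≠ 0)
    (heig : ∀ (μ : ℂ) (x : n → ℂ), x ≠ 0 → complexify A *ᵥ x = μ • x →
      μ = k ∨ μ = t ∨ μ = θ ∨ μ = star θ) :
    ∀ X Y : Matrix n n ℝ,
      X ∈ Submodule.span ℝ {1, A, Aᵀ, onesMatrix n - 1 - A - Aᵀ} →
      Y ∈ Submodule.span ℝ {1, A, Aᵀ, onesMatrix n - 1 - A - Aᵀ} →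
      X * Y ∈ Submodule.span ℝ {1, A, Aᵀ, onesMatrix n - 1 - A - Aᵀ} := by
  have heig_ne : ∀ (μ : ℂ) (x : n → ℂ), x ≠ 0 → μ ≠ k → complexify A *ᵥ x = μ • x →
      μ = t ∨ μ = θ ∨ μ = star θ := fun μ x hx0 hμ hx => (heig μ x hx0 hx).resolve_left hμ
  suffices ∃ t' : ℝ, θ.re ≠ t' ∧ ∀ (μ : ℂ) (x : n → ℂ), x ≠ 0 → μ ≠ k →
      complexify A *ᵥ x = μ • x → μ = t' ∨ μ = θ ∨ μ = star θ by
    obtain ⟨t', hre, heig'⟩ := this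
    rw [← toSubmodule_eigenspaceScalars_eq_span hA hreg hconn him hre heig']
    exact fun X Y hX hY => (eigenspaceScalars A).mul_mem hX hY
  rcases ne_or_eq θ.re t with hre | rfl
  · exact ⟨t, hre, heig_ne⟩
  · refine ⟨θ.re + 1, (lt_add_one θ.re).ne, fun μ x hx0 hμ hx =>
      (heig_ne μ x hx0 hμ hx).imp_left ?_⟩
    rintro rfl
    refine hx0 (eigenvector_eq_zero_of_forall_re_eq h01 hasym hA hreg hconn
      (fun ν y hy0 hν hy => ?_) (mod_cast hμ) hx) |>.elim
    rcases heig_ne ν y hy0 hν hy with rfl | rfl | rfl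
    · exact Complex.ofReal_re _
    · rfl
    · exact Complex.conj_re _

/-- A regular connected digraph with normal adjacency matrix, no undirected
    edges, and exactly four distinct eigenvalues k, τ, θ, θ̄ is a relation of
    a non-symmetric association scheme with three classes: the span of
    {I, A, Aᵀ, J − I − A − Aᵀ} is closed under matrix multiplication. -/
theorem stmt15 (v : ℕ) (k : ℝ) (τ θ : ℂ) (A : Matrix (Fin v) (Fin v) ℝ)
    (h01 : ∀ i j, A i j = 0 ∨ A i j = 1) (hdiag : ∀ i, A i i = 0)
    (hasym : ∀ i j, (A + Aᵀ) i j = 0 ∨ (A + Aᵀ) i j = 1)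
    (hreg : A * allOnes v = k • allOnes v ∧ allOnes v * A = k • allOnes v)
    (hnormal : A * Aᵀ = Aᵀ * A)
    (hconn : ∀ x : Fin v → ℂ,
      (A.map (Complex.ofReal)).mulVec x = (k : ℂ) • x → ∀ i j, x i = x j)
    (hτ : τ.im = 0) (hθ : θ.im ≠ 0)
    (hdist : (k : ℂ) ≠ τ ∧ (k : ℂ) ≠ θ ∧ (k : ℂ) ≠ (starRingEnd ℂ) θ ∧
      τ ≠ θ ∧ τ ≠ (starRingEnd ℂ) θ ∧ θ ≠ (starRingEnd ℂ) θ)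
    (heig : ∀ μ : ℂ, (∃ x : Fin v → ℂ, x ≠ 0 ∧
        (A.map (Complex.ofReal)).mulVec x = μ • x) ↔
      (μ = (k : ℂ) ∨ μ = τ ∨ μ = θ ∨ μ = (starRingEnd ℂ) θ)) :
    ∀ X Y : Matrix (Fin v) (Fin v) ℝ,
      X ∈ Submodule.span ℝ
        ({1, A, Aᵀ, allOnes v - 1 - A - Aᵀ} : Set (Matrix (Fin v) (Fin v) ℝ)) →
      Y ∈ Submodule.span ℝ
        ({1, A, Aᵀ, allOnes v - 1 - A - Aᵀ} : Set (Matrix (Fin v) (Fin v) ℝ)) →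
      X * Y ∈ Submodule.span ℝ
        ({1, A, Aᵀ, allOnes v - 1 - A - Aᵀ} : Set (Matrix (Fin v) (Fin v) ℝ)) := by
  have hreg_vec : A *ᵥ 1 = k • 1 := by
    ext i
    simpa [allOnes, mul_apply, mulVec, dotProduct] using congrFun (congrFun hreg.1 i) i
  exact stmt15_general (t := τ.re) h01 hasym hreg_vec hnormal hconn hθ fun μ x hx0 hx => by
    simpa [Complex.ext_iff, hτ] using (heig μ).mp ⟨x, hx0, hx⟩
end

section
/- For every multiple k of 3 such that k+1 is a prime power, there exists a subset S of ℤ_v with v = (k²+3k+3)/3 such that the Cayley digraph Cay(ℤ_v, S) is an asymmetric normally regular digraph with parameters (v, k, 1, 3). -/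
/-!
Let `L / K` be the cubic extension of the field with `q = k + 1` elements, and let `f` be a nonzero
linear form on `L`. For `γ ∉ K` the forms `f` and `f (γ * ·)` are independent, so they vanish
together on exactly one line: the points of the projective line `f = 0` form a perfect difference
set in the cyclic group `Lˣ ⧸ Kˣ` of order `q² + q + 1 = 3 * v` (Singer).

Project this set `D` to `ℤ_v`. The kernel has two nonzero elements `± t`, so exactly one unordered
pair of elements of `D` collides, and we may translate that pair to `{0, t}`. The image of `D` is
then `0` taken twice together with a set `S`, and every nonzero `g` is a difference of the image in
`3` ways. Hence `S` has exactly `3 - 2 * [g ∈ S] - 2 * [-g ∈ S]` differences equal to `g`; as this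
number is nonnegative, `g` and `-g` are never both in `S`.
-/

open Finset Pointwise

/-- `D` is a (planar) perfect difference set: every nonzero `g` is a difference `y - x` of two
elements of `D` in exactly one way, the pair being recorded by `x`. -/
def IsPerfectDifferenceSet {A : Type*} [AddCommGroup A] (D : Set A) : Prop :=
  ∀ g : A, g ≠ 0 → ∃! x, x ∈ D ∧ x + g ∈ D

/-- `S` is the connection set of a Cayley digraph that is an asymmetric normally regular digraph
with parameters `(|C|, k, l, m)`. As `S` and `-S` are disjoint, differences occurring `2 * l - m`
times do not arise. -/
structure IsAsymmetricNRD {C : Type*} [AddCommGroup C] [DecidableEq C] (S : Finset C)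
    (k l m : ℕ) : Prop where
  zero_notMem : 0 ∉ S
  card_eq : #S = k
  neg_notMem : ∀ s ∈ S, -s ∉ S
  card_filter_sub_eq : ∀ g, g ≠ 0 →
    #{p ∈ S ×ˢ S | p.2 - p.1 = g} = if g ∈ S ∨ -g ∈ S then l else m

section DoubledZero

variable {ι C : Type*} {D : Finset ι} {φ : ι → C} {S : Finset C}

lemma sum_comp_of_map_val_eq [Zero C] {M : Type*} [AddCommMonoid M]
    (hDS : D.val.map φ = 0 ::ₘ 0 ::ₘ S.val) (F : C → M) :
    ∑ x ∈ D, F (φ x) = 2 • F 0 + ∑ s ∈ S, F s := by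
  calc
    ∑ x ∈ D, F (φ x) = ((D.val.map φ).map F).sum := by rw [Multiset.map_map]; rfl
    _ = F 0 + (F 0 + ∑ s ∈ S, F s) := by simp only [hDS, Multiset.map_cons, Multiset.sum_cons]; rfl
    _ = 2 • F 0 + ∑ s ∈ S, F s := by rw [two_nsmul, add_assoc]

variable [AddCommGroup C] [DecidableEq C]

/-- The coefficient of `g` in `(2 + S) * (2 + S⁻¹) = 4 + 2 * S + 2 * S⁻¹ + S * S⁻¹`, an identity
in the group ring of `C`. -/
lemma card_filter_sub_of_map_val_eq (hDS : D.val.map φ = 0 ::ₘ 0 ::ₘ S.val) {g : C}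
    (hg : g ≠ 0) :
    #{p ∈ D ×ˢ D | φ p.2 - φ p.1 = g} =
      2 * (if g ∈ S then 1 else 0) + 2 * (if -g ∈ S then 1 else 0) +
        #{p ∈ S ×ˢ S | p.2 - p.1 = g} := by
  have hrow (a : C) : ∑ y ∈ D, (if φ y - a = g then 1 else 0) =
      2 * (if -g = a then 1 else 0) + ∑ s ∈ S, if s - a = g then 1 else 0 := by
    rw [sum_comp_of_map_val_eq hDS fun b ↦ if b - a = g then 1 else 0]
    simp only [smul_eq_mul, zero_sub, neg_eq_iff_eq_neg (a := a), eq_comm (b := a)]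
  calc
    #{p ∈ D ×ˢ D | φ p.2 - φ p.1 = g}
      = ∑ x ∈ D, ∑ y ∈ D, if φ y - φ x = g then 1 else 0 := by rw [card_filter, sum_product]
    _ = 2 * (∑ y ∈ D, if φ y - 0 = g then 1 else 0) +
          ∑ s ∈ S, ∑ y ∈ D, if φ y - s = g then 1 else 0 :=
      sum_comp_of_map_val_eq hDS fun a ↦ ∑ y ∈ D, if φ y - a = g then 1 else 0
    _ = 2 * (∑ s ∈ S, if s = g then 1 else 0) + (2 * (∑ s ∈ S, if -g = s then 1 else 0) +
          ∑ s ∈ S, ∑ s' ∈ S, if s' - s = g then 1 else 0) := by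
      rw [hrow 0]
      simp only [hrow, sub_zero, neg_eq_zero, hg, if_false, mul_zero, zero_add, sum_add_distrib,
        ← mul_sum]
    _ = _ := by rw [sum_ite_eq', sum_ite_eq, card_filter, sum_product, add_assoc]

lemma isAsymmetricNRD_of_map_val_eq (hDS : D.val.map φ = 0 ::ₘ 0 ::ₘ S.val) (h0S : 0 ∉ S)
    (hdiff : ∀ g, g ≠ 0 → #{p ∈ D ×ˢ D | φ p.2 - φ p.1 = g} = 3) :
    IsAsymmetricNRD S (#D - 2) 1 3 := by
  have hcount (g : C) (hg : g ≠ 0) := (card_filter_sub_of_map_val_eq hDS hg).symm.trans (hdiff g hg)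
  refine ⟨h0S, ?_, fun s hs hs' ↦ ?_, fun g hg ↦ ?_⟩
  · have hcard : #D = #S + 1 + 1 := by simpa using congrArg Multiset.card hDS
    rw [hcard]; rfl
  · have hs0 : s ≠ 0 := ne_of_mem_of_not_mem hs h0S
    have := hcount s hs0
    rw [if_pos hs, if_pos hs'] at this
    lia
  · have := hcount g hg
    split_ifs at this ⊢ <;> grind

end DoubledZero

namespace IsPerfectDifferenceSet

variable {A B : Type*} [AddCommGroup A] [AddCommGroup B]

lemma vadd {D : Set A} (hD : IsPerfectDifferenceSet D) (a : A) :
    IsPerfectDifferenceSet (a +ᵥ D) := by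
  intro g hg
  simp only [Set.mem_vadd_set_iff_neg_vadd_mem, vadd_eq_add, ← add_assoc]
  exact (Equiv.addLeft (-a)).bijective.existsUnique_iff.mp (hD g hg)

lemma preimage {D : Set A} (hD : IsPerfectDifferenceSet D) (e : B ≃+ A) :
    IsPerfectDifferenceSet (e ⁻¹' D) := by
  intro g hg
  simp only [Set.mem_preimage, map_add]
  exact e.bijective.existsUnique_iff.mp (hD (e g) (by simpa using hg))

lemma bijOn_sub {D : Set A} (hD : IsPerfectDifferenceSet D) :
    Set.BijOn (fun p : A × A ↦ p.2 - p.1) D.offDiag {0}ᶜ := by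
  refine ⟨fun p hp ↦ sub_ne_zero.mpr hp.2.2.symm, ?_, fun g hg ↦ ?_⟩
  · rintro ⟨x, y⟩ ⟨hx, hy, hxy⟩ ⟨x', y'⟩ ⟨hx', hy', -⟩ (h : y - x = y' - x')
    obtain rfl : x = x' := (hD (y - x) (sub_ne_zero.mpr hxy.symm)).unique
      ⟨hx, by simpa using hy⟩ ⟨hx', by simpa [h] using hy'⟩
    rw [sub_left_inj.mp h]
  · obtain ⟨x, ⟨hx, hxg⟩, -⟩ := hD g hg
    exact ⟨(x, x + g), ⟨hx, hxg, by simpa using hg⟩, add_sub_cancel_left x g⟩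

variable {D : Finset A}

lemma card_filter_offDiag (hD : IsPerfectDifferenceSet (D : Set A)) (P : A → Prop)
    [DecidablePred P] :
    #{p ∈ D.offDiag | P (p.2 - p.1)} = {a | a ≠ 0 ∧ P a}.ncard := by
  have hbij := hD.bijOn_sub.subset_right (r := {a | a ≠ 0 ∧ P a}) fun _ ha ↦ ha.1
  rw [← Set.ncard_coe_finset, ← hbij.ncard_eq]
  congr 1
  ext p
  simp only [coe_filter, mem_offDiag, Set.mem_ofPred_eq, Set.mem_inter_iff, Set.mem_offDiag,
    mem_coe, Set.mem_preimage, sub_ne_zero]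
  tauto

lemma card_eq_add_one (hD : IsPerfectDifferenceSet (D : Set A)) {q : ℕ} (hq : 0 < q)
    (hA : Nat.card A = q ^ 2 + q + 1) : #D = q + 1 := by
  have : Finite A := Nat.finite_of_card_ne_zero (by lia)
  have hoff : #D * #D - #D = q ^ 2 + q := by
    rw [← offDiag_card, ← Set.ncard_coe_finset, coe_offDiag, hD.bijOn_sub.ncard_eq,
      Set.ncard_compl, hA, Set.ncard_singleton, Nat.add_sub_cancel]
  have hsq : #D * #D = #D + (q ^ 2 + q) := by have := Nat.le_mul_self #D; lia
  nlinarith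

lemma exists_zero_mem_vadd [DecidableEq A] (hD : IsPerfectDifferenceSet (D : Set A)) {t : A}
    (ht : t ≠ 0) : ∃ a : A, 0 ∈ a +ᵥ D ∧ t ∈ a +ᵥ D := by
  obtain ⟨x, ⟨hx, hxt⟩, -⟩ := hD t ht
  exact ⟨-x, mem_vadd_finset.mpr ⟨x, hx, by simp⟩, mem_vadd_finset.mpr ⟨x + t, hxt, by simp⟩⟩

section Quotient

variable {C : Type*} [AddCommGroup C] {π : A →+ C}

lemma card_filter_map_sub_eq [DecidableEq C] (hD : IsPerfectDifferenceSet (D : Set A))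
    (hπ : Function.Surjective π) {g : C} (hg : g ≠ 0) :
    #{p ∈ D ×ˢ D | π p.2 - π p.1 = g} = Nat.card π.ker := by
  calc
    #{p ∈ D ×ˢ D | π p.2 - π p.1 = g}
      = #{p ∈ D.offDiag | π (p.2 - p.1) = g} := by
        congr 1
        ext ⟨x, y⟩
        have : π y - π x = g → x ≠ y := by rintro h rfl; exact hg (by simpa using h.symm)
        simp only [mem_filter, mem_product, mem_offDiag, map_sub]
        tauto
    _ = {a | a ≠ 0 ∧ π a = g}.ncard := hD.card_filter_offDiag (π · = g)
    _ = (π ⁻¹' {g}).ncard := by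
        congr 1
        ext a
        have : π a = g → a ≠ 0 := by rintro h rfl; exact hg (by simpa using h.symm)
        simpa using this
    _ = Nat.card π.ker := Nat.card_congr (AddMonoidHom.fiberEquivKerOfSurjective hπ g)

variable {t : A}

lemma offDiag_filter_map_eq [DecidableEq A] [DecidableEq C]
    (hD : IsPerfectDifferenceSet (D : Set A)) (hker : Nat.card π.ker = 3)
    (h0 : 0 ∈ D) (ht : t ∈ D) (ht0 : t ≠ 0) (hπt : π t = 0) :
    {p ∈ D.offDiag | π p.1 = π p.2} = {(0, t), (t, 0)} := by
  symm
  apply eq_of_subset_of_card_le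
  · simp [insert_subset_iff, *, ht0.symm]
  · rw [card_pair (by simp [ht0])]
    refine le_of_eq ?_
    calc
      #{p ∈ D.offDiag | π p.1 = π p.2} = #{p ∈ D.offDiag | π (p.2 - p.1) = 0} := by
        simp only [map_sub, sub_eq_zero, eq_comm (a := π (Prod.fst _))]
      _ = {a | a ≠ 0 ∧ π a = 0}.ncard := hD.card_filter_offDiag (π · = 0)
      _ = ((π.ker : Set A) \ {0}).ncard := by
        congr 1
        ext a
        simp [and_comm]
      _ = 2 := by
        rw [Set.ncard_sdiff_singleton_of_mem (zero_mem π.ker)]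
        exact congrArg (· - 1) hker

lemma map_val_eq [DecidableEq C] (hD : IsPerfectDifferenceSet (D : Set A))
    (hker : Nat.card π.ker = 3) (h0 : 0 ∈ D) (ht : t ∈ D) (ht0 : t ≠ 0) (hπt : π t = 0) :
    D.val.map π = 0 ::ₘ 0 ::ₘ ((D.image π).erase 0).val := by
  classical
  have hzero : 0 ∈ (D.erase t).image π :=
    mem_image.mpr ⟨0, mem_erase.mpr ⟨ht0.symm, h0⟩, map_zero π⟩
  have himage : D.image π = (D.erase t).image π := by
    conv_lhs => rw [← insert_erase ht, image_insert, hπt, insert_eq_of_mem hzero]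
  have hinj : Set.InjOn π (D.erase t) := by
    intro x hx y hy hxy
    by_contra hne
    simp only [coe_erase, Set.mem_sdiff, mem_coe, Set.mem_singleton_iff] at hx hy
    have hpair : (x, y) ∈ ({(0, t), (t, 0)} : Finset (A × A)) := by
      rw [← offDiag_filter_map_eq hD hker h0 ht ht0 hπt, mem_filter, mem_offDiag]
      exact ⟨⟨hx.1, hy.1, hne⟩, hxy⟩
    simp only [mem_insert, mem_singleton, Prod.mk.injEq] at hpair
    tauto
  calc
    D.val.map π = π t ::ₘ (D.erase t).val.map π := by
      rw [← Multiset.map_cons, erase_val, Multiset.cons_erase ht]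
    _ = 0 ::ₘ (D.image π).val := by rw [hπt, himage, image_val_of_injOn hinj]
    _ = 0 ::ₘ 0 ::ₘ ((D.image π).erase 0).val := by
      rw [erase_val, Multiset.cons_erase (himage ▸ hzero)]

theorem exists_isAsymmetricNRD [DecidableEq C] (hD : IsPerfectDifferenceSet (D : Set A))
    (hπ : Function.Surjective π) (hker : Nat.card π.ker = 3) :
    ∃ S : Finset C, IsAsymmetricNRD S (#D - 2) 1 3 := by
  classical
  obtain ⟨⟨t, hπt⟩, ht0⟩ : ∃ t : π.ker, t ≠ 0 := by
    have : Finite π.ker := Nat.finite_of_card_ne_zero (by lia)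
    have : Nontrivial π.ker := Finite.one_lt_card_iff_nontrivial.mp (by lia)
    exact exists_ne 0
  obtain ⟨a, h0, ht⟩ := hD.exists_zero_mem_vadd (t := t) (by simpa using ht0)
  have hD' : IsPerfectDifferenceSet ((a +ᵥ D : Finset A) : Set A) := by
    simpa using hD.vadd a
  have hDS := hD'.map_val_eq hker h0 ht (by simpa using ht0) hπt
  refine ⟨_, card_vadd_finset a D ▸ isAsymmetricNRD_of_map_val_eq hDS (notMem_erase 0 _) ?_⟩
  intro g hg
  rw [hD'.card_filter_map_sub_eq hπ hg, hker]

end Quotient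

end IsPerfectDifferenceSet

section Singer

variable (K L : Type*) [Field K] [Field L] [Algebra K L]

/-- The copy of `Kˣ` inside `Lˣ`, so that `Lˣ ⧸ scalarUnits K L` is the group of points of the
projective space of `L` over `K`. -/
def scalarUnits : Subgroup Lˣ := (Units.map (algebraMap K L).toMonoidHom).range

variable {K L}

lemma mem_scalarUnits_iff {u : Lˣ} : u ∈ scalarUnits K L ↔ ∃ c : K, algebraMap K L c = u := by
  refine ⟨fun ⟨c, hc⟩ ↦ ⟨c, congrArg Units.val hc⟩, fun ⟨c, hc⟩ ↦ ?_⟩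
  have hc0 : c ≠ 0 := by rintro rfl; exact u.ne_zero (by simpa using hc.symm)
  exact ⟨Units.mk0 c hc0, Units.ext hc⟩

lemma mk_eq_mk_iff_exists_smul {u w : Lˣ} :
    (u : Lˣ ⧸ scalarUnits K L) = w ↔ ∃ c : K, c • (u : L) = w := by
  simp only [QuotientGroup.eq, mem_scalarUnits_iff, Units.val_mul, Units.val_inv_eq_inv_val,
    Algebra.smul_def, eq_inv_mul_iff_mul_eq₀ u.ne_zero, mul_comm (u : L)]

lemma index_scalarUnits [Finite K] [Module.Finite K L] :
    (scalarUnits K L).index = ∑ i ∈ range (Module.finrank K L), Nat.card K ^ i := by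
  have hcard : Nat.card (scalarUnits K L) = Nat.card K - 1 := by
    rw [← Nat.card_units]
    exact (Nat.card_congr (MonoidHom.ofInjective
      (Units.map_injective (algebraMap K L).injective)).toEquiv).symm
  have hK : 1 < Nat.card K := Finite.one_lt_card
  rw [Nat.geomSum_eq hK, ← Module.natCard_eq_pow_finrank, ← Nat.card_units L, ← hcard,
    ← (scalarUnits K L).index_mul_card, Nat.mul_div_cancel _ (by lia)]

lemma linearIndependent_comp_mul {ι : Type*} {v : ι → L} (hv : LinearIndependent K v)
    {f : Module.Dual K L} (hf : f ≠ 0) :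
    LinearIndependent K fun i ↦ (f ∘ₗ LinearMap.mulLeft K (v i) : Module.Dual K L) := by
  refine hv.map' ((LinearMap.mul K L).compr₂ f) (LinearMap.ker_eq_bot'.mpr fun a ha ↦ ?_)
  by_contra ha0
  refine hf (LinearMap.ext fun y ↦ ?_)
  simpa [mul_div_cancel₀ _ ha0] using LinearMap.congr_fun ha (y / a)

lemma exists_forall_map_eq_zero_iff (h3 : Module.finrank K L = 3)
    {f : Module.Dual K L} (hf : f ≠ 0) {γ : L} (hγ : ∀ c : K, algebraMap K L c ≠ γ) :
    ∃ v : L, v ≠ 0 ∧ ∀ w, f w = 0 ∧ f (γ * w) = 0 ↔ ∃ c : K, c • v = w := by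
  have : FiniteDimensional K L := Module.finite_of_finrank_pos (by lia)
  have hindep : LinearIndependent K ![1, γ] :=
    (LinearIndependent.pair_iff' one_ne_zero).mpr fun c ↦ by
      simpa only [← Algebra.algebraMap_eq_smul_one] using hγ c
  set W := Submodule.span K (Set.range fun i ↦
    (f ∘ₗ LinearMap.mulLeft K (![1, γ] i) : Module.Dual K L)) with hW
  have hmem (w : L) : w ∈ W.dualCoannihilator ↔ f w = 0 ∧ f (γ * w) = 0 := by
    rw [hW, ← SetLike.mem_coe, Submodule.coe_dualCoannihilator_span, Set.mem_ofPred_eq,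
      Set.forall_mem_range, Fin.forall_fin_two]
    simp
  have hline : Module.finrank K W.dualCoannihilator = 1 := by
    have hW2 : Module.finrank K W = 2 := by
      rw [hW, finrank_span_eq_card (linearIndependent_comp_mul hindep hf), Fintype.card_fin]
    have hdim := Subspace.finrank_add_finrank_dualCoannihilator_eq W
    lia
  obtain ⟨v, hv0, hv⟩ := finrank_eq_one_iff'.mp hline
  refine ⟨v, by simpa using hv0, fun w ↦ ?_⟩
  rw [← hmem]
  exact ⟨fun hw ↦ (hv ⟨w, hw⟩).imp fun c hc ↦ congrArg Subtype.val hc,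
    fun ⟨c, hc⟩ ↦ hc ▸ W.dualCoannihilator.smul_mem c v.2⟩

/-- Singer's set: the points of the hyperplane `f = 0` of the projective space of `L` over `K`. -/
def singerSet (f : Module.Dual K L) : Set (Additive (Lˣ ⧸ scalarUnits K L)) :=
  {x | ∃ u : Lˣ, f u = 0 ∧ Additive.ofMul (u : Lˣ ⧸ scalarUnits K L) = x}

lemma ofMul_mk_mem_singerSet {f : Module.Dual K L} {u : Lˣ} :
    Additive.ofMul (u : Lˣ ⧸ scalarUnits K L) ∈ singerSet f ↔ f u = 0 := by
  refine ⟨fun ⟨w, hw, hwu⟩ ↦ ?_, fun hu ↦ ⟨u, hu, rfl⟩⟩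
  obtain ⟨c, hc⟩ := mk_eq_mk_iff_exists_smul.mp hwu
  rw [← hc, map_smul, hw, smul_zero]

theorem isPerfectDifferenceSet_singerSet (h3 : Module.finrank K L = 3) {f : Module.Dual K L}
    (hf : f ≠ 0) : IsPerfectDifferenceSet (singerSet f) := by
  intro g hg
  have hsurj (x : Additive (Lˣ ⧸ scalarUnits K L)) :
      ∃ u : Lˣ, Additive.ofMul (u : Lˣ ⧸ scalarUnits K L) = x :=
    QuotientGroup.mk_surjective x.toMul
  obtain ⟨γ, rfl⟩ := hsurj g
  have hγ (c : K) : algebraMap K L c ≠ γ := fun hc ↦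
    hg ((QuotientGroup.eq_one_iff γ).mpr (mem_scalarUnits_iff.mpr ⟨c, hc⟩))
  obtain ⟨v, hv0, hv⟩ := exists_forall_map_eq_zero_iff h3 hf hγ
  have hmem (w : Lˣ) : Additive.ofMul (w : Lˣ ⧸ scalarUnits K L) ∈ singerSet f ∧
      Additive.ofMul (w : Lˣ ⧸ scalarUnits K L) + Additive.ofMul (γ : Lˣ ⧸ scalarUnits K L) ∈
        singerSet f ↔ ∃ c : K, c • v = w := by
    rw [← ofMul_mul, ← QuotientGroup.mk_mul, ofMul_mk_mem_singerSet, ofMul_mk_mem_singerSet,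
      Units.val_mul, mul_comm, hv]
  refine ⟨Additive.ofMul ↑(Units.mk0 v hv0), (hmem _).mpr ⟨1, one_smul K v⟩, fun x hx ↦ ?_⟩
  obtain ⟨w, rfl⟩ := hsurj x
  exact congrArg Additive.ofMul (mk_eq_mk_iff_exists_smul.mpr ((hmem w).mp hx)).symm

theorem exists_isPerfectDifferenceSet_zmod {q : ℕ} (hq : IsPrimePow q) :
    ∃ D : Set (ZMod (q ^ 2 + q + 1)), IsPerfectDifferenceSet D := by
  obtain ⟨p, m, hp, hm, rfl⟩ := hq
  have : Fact p.Prime := ⟨hp.nat_prime⟩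
  let K := GaloisField p m
  let L := FiniteField.Extension K p 3
  have h3 : Module.finrank K L = 3 := FiniteField.finrank_extension K p 3
  have hcard : Nat.card (Additive (Lˣ ⧸ scalarUnits K L)) = (p ^ m) ^ 2 + p ^ m + 1 := by
    rw [Nat.card_congr Additive.toMul, ← Subgroup.index_eq_card, index_scalarUnits, h3,
      GaloisField.card p m hm.ne', sum_range_succ, sum_range_succ, sum_range_one]
    ring
  obtain ⟨f, hf⟩ := exists_ne (0 : Module.Dual K L)
  rw [← hcard]
  exact ⟨_, (isPerfectDifferenceSet_singerSet h3 hf).preimage (zmodAddCyclicAddEquiv inferInstance)⟩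

end Singer

lemma card_ker_castHom {m n : ℕ} [NeZero m] (h : m ∣ n) :
    Nat.card (ZMod.castHom h (ZMod m)).toAddMonoidHom.ker = n / m := by
  have hπ : Function.Surjective (ZMod.castHom h (ZMod m)).toAddMonoidHom :=
    ZMod.castHom_surjective h
  have := (ZMod.castHom h (ZMod m)).toAddMonoidHom.ker.card_mul_index
  rw [AddSubgroup.index_ker, AddMonoidHom.range_eq_top.mpr hπ, AddSubgroup.card_top,
    Nat.card_zmod, Nat.card_zmod] at this
  exact Nat.eq_div_of_mul_eq_left (NeZero.ne m) this

/-- For every multiple k of 3 with k+1 a prime power there is a subset S of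
    ℤ_v, v = (k²+3k+3)/3, such that Cay(ℤ_v, S) is an asymmetric normally
    regular digraph with parameters (v, k, 1, 3). -/
theorem stmt17 (k : ℕ) (h3 : 3 ∣ k) (hpp : IsPrimePow (k + 1)) :
    ∃ S : Finset (ZMod ((k ^ 2 + 3 * k + 3) / 3)),
      (0 : ZMod ((k ^ 2 + 3 * k + 3) / 3)) ∉ S ∧
      S.card = k ∧
      (∀ s ∈ S, -s ∉ S) ∧
      ∀ g : ZMod ((k ^ 2 + 3 * k + 3) / 3), g ≠ 0 →
        ((S ×ˢ S).filter (fun p => p.2 - p.1 = g)).card =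
          if g ∈ S ∨ -g ∈ S then 1 else 3 := by
  set v := (k ^ 2 + 3 * k + 3) / 3 with hv
  have hN : (k + 1) ^ 2 + (k + 1) + 1 = 3 * v := by
    rw [hv, Nat.mul_div_cancel' (by simpa using dvd_add (h3.pow two_ne_zero) (dvd_mul_right 3 k))]
    ring
  have : NeZero v := ⟨by lia⟩
  have hdvd : v ∣ (k + 1) ^ 2 + (k + 1) + 1 := hN ▸ dvd_mul_left v 3
  obtain ⟨D₀, hD⟩ := exists_isPerfectDifferenceSet_zmod hpp
  obtain ⟨D, rfl⟩ := D₀.toFinite.exists_finset_coe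
  have hcard : #D = k + 1 + 1 := hD.card_eq_add_one k.succ_pos (Nat.card_zmod _)
  have hker : Nat.card (ZMod.castHom hdvd (ZMod v)).toAddMonoidHom.ker = 3 := by
    rw [card_ker_castHom, hN, Nat.mul_div_cancel _ (NeZero.pos v)]
  obtain ⟨S, hS⟩ := hD.exists_isAsymmetricNRD (ZMod.castHom_surjective hdvd) hker
  exact ⟨S, hS.zero_notMem, by rw [hS.card_eq, hcard]; rfl, hS.neg_notMem, hS.card_filter_sub_eq⟩
end
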